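/- For every involution θ in the Weyl group W(Bₙ) (acting on ℝⁿ as a signed permutation), the number |{α ∈ Δ⁺ : θα ∉ Δ⁺}| + dim ker(θ + id) is even. Consequently the length ℓ(θ) := (1/2)|{α ∈ Δ⁺ : θα ∉ Δ⁺}| + (1/2) dim ker(θ + id) is a nonnegative integer. -/

import Mathlib

open scoped RealInnerProductSpace

noncomputable section

/-- Euclidean space `ℝⁿ`. -/
abbrev EucB (n : ℕ) := EuclideanSpace ℝ (Fin n)

/-- The `i`-th standard basis vector of `ℝⁿ`. -/
def eB (n : ℕ) (i : Fin n) : EucB n := EuclideanSpace.single i (1 : ℝ)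

/-- The root system `Δ` of type `Bₙ`:
`{±eᵢ ± eⱼ : i < j} ∪ {±eᵢ}`. -/
def DeltaB (n : ℕ) : Set (EucB n) :=
  {v | (∃ i j : Fin n, i < j ∧
          (v = eB n i + eB n j ∨ v = eB n i - eB n j ∨
           v = -eB n i + eB n j ∨ v = -eB n i - eB n j)) ∨
        ∃ i : Fin n, v = eB n i ∨ v = -eB n i}

/-- The positive system `Δ⁺ = {eᵢ ± eⱼ : i < j} ∪ {eᵢ}`. -/
def DeltaBpos (n : ℕ) : Set (EucB n) :=
  {v | (∃ i j : Fin n, i < j ∧ (v = eB n i + eB n j ∨ v = eB n i - eB n j)) ∨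
        ∃ i : Fin n, v = eB n i}

/-- The coroot `α∨ = 2α/⟪α,α⟫`. -/
def corootB (n : ℕ) (α : EucB n) : EucB n := (2 / ⟪α, α⟫) • α

/-- The linear functional `x ↦ ⟪x, α∨⟫`. -/
def corootForm (n : ℕ) (α : EucB n) : Module.Dual ℝ (EucB n) where
  toFun x := ⟪x, corootB n α⟫
  map_add' x y := inner_add_left _ _ _
  map_smul' c x := by simpa using real_inner_smul_left x (corootB n α) c

/-- The reflection `s_α(x) = x − ⟪x, α∨⟫ α` as a linear automorphism of `ℝⁿ`
(for `α` a root, the branch condition `⟪α, α∨⟫ = 2` holds). -/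
def sReflB (n : ℕ) (α : EucB n) : EucB n ≃ₗ[ℝ] EucB n :=
  if h : corootForm n α α = 2 then Module.reflection h else LinearEquiv.refl ℝ (EucB n)

/-- The Weyl group `W(Bₙ)`, the subgroup of linear automorphisms of `ℝⁿ` generated by the
reflections in the roots of `Δ`. -/
def WeylB (n : ℕ) : Subgroup (EucB n ≃ₗ[ℝ] EucB n) :=
  Subgroup.closure {g | ∃ α ∈ DeltaB n, g = sReflB n α}



theorem eB_apply (n : ℕ) (i k : Fin n) : eB n i k = if k = i then 1 else 0 := by
  simp [eB, Pi.single_apply]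

/-- Roots are stable under negation, and split as positive and negative. -/
theorem mem_DeltaB_iff (n : ℕ) (v : EucB n) :
    v ∈ DeltaB n ↔ v ∈ DeltaBpos n ∨ -v ∈ DeltaBpos n := by
  constructor
  · rintro (⟨i, j, hij, (rfl | rfl | rfl | rfl)⟩ | ⟨i, (rfl | rfl)⟩)
    · exact Or.inl (Or.inl ⟨i, j, hij, Or.inl rfl⟩)
    · exact Or.inl (Or.inl ⟨i, j, hij, Or.inr rfl⟩)
    · exact Or.inr (Or.inl ⟨i, j, hij, Or.inr (by abel)⟩)
    · exact Or.inr (Or.inl ⟨i, j, hij, Or.inl (by abel)⟩)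
    · exact Or.inl (Or.inr ⟨i, rfl⟩)
    · exact Or.inr (Or.inr ⟨i, by simp⟩)
  · rintro ((⟨i, j, hij, (rfl | rfl)⟩ | ⟨i, rfl⟩) | (⟨i, j, hij, (h | h)⟩ | ⟨i, h⟩))
    · exact Or.inl ⟨i, j, hij, Or.inl rfl⟩
    · exact Or.inl ⟨i, j, hij, Or.inr (Or.inl rfl)⟩
    · exact Or.inr ⟨i, Or.inl rfl⟩
    · refine Or.inl ⟨i, j, hij, Or.inr (Or.inr (Or.inr ?_))⟩
      rw [← neg_neg v, h]; abel
    · refine Or.inl ⟨i, j, hij, Or.inr (Or.inr (Or.inl ?_))⟩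
      rw [← neg_neg v, h]; abel
    · refine Or.inr ⟨i, Or.inr ?_⟩
      rw [← neg_neg v, h]

/-- A functional that is positive on the positive roots. -/
def heightB (n : ℕ) (v : EucB n) : ℝ := ∑ i : Fin n, ((n : ℝ) - (i : ℕ)) * v i

theorem heightB_eB (n : ℕ) (i : Fin n) : heightB n (eB n i) = (n : ℝ) - (i : ℕ) := by
  simp [heightB, eB_apply]

theorem heightB_add (n : ℕ) (v w : EucB n) : heightB n (v + w) = heightB n v + heightB n w := by
  simp [heightB, mul_add, Finset.sum_add_distrib]

theorem heightB_neg (n : ℕ) (v : EucB n) : heightB n (-v) = -heightB n v := by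
  simp [heightB]

theorem heightB_pos (n : ℕ) (v : EucB n) (hv : v ∈ DeltaBpos n) : 0 < heightB n v := by
  have key : ∀ i : Fin n, (0 : ℝ) < (n : ℝ) - (i : ℕ) := fun i => by
    have : ((i : ℕ) : ℝ) < n := by exact_mod_cast i.2
    linarith
  rcases hv with ⟨i, j, hij, (rfl | rfl)⟩ | ⟨i, rfl⟩
  · rw [heightB_add, heightB_eB, heightB_eB]
    linarith [key i, key j]
  · rw [sub_eq_add_neg, heightB_add, heightB_neg, heightB_eB, heightB_eB]
    have : ((i : ℕ) : ℝ) < (j : ℕ) := by exact_mod_cast hij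
    linarith
  · rw [heightB_eB]; exact key i

theorem neg_notMem (n : ℕ) (v : EucB n) (hv : v ∈ DeltaBpos n) : -v ∉ DeltaBpos n := by
  intro h
  have h1 := heightB_pos n v hv
  have h2 := heightB_pos n _ h
  rw [heightB_neg] at h2
  linarith

theorem DeltaBpos_finite (n : ℕ) : (DeltaBpos n).Finite := by
  have h1 := Set.finite_range (fun p : Fin n × Fin n => eB n p.1 + eB n p.2)
  have h2 := Set.finite_range (fun p : Fin n × Fin n => eB n p.1 - eB n p.2)
  have h3 := Set.finite_range (fun p : Fin n => eB n p)
  refine ((h1.union h2).union h3).subset ?_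
  rintro v (⟨i, j, hij, (rfl | rfl)⟩ | ⟨i, rfl⟩)
  · exact Or.inl (Or.inl ⟨(i, j), rfl⟩)
  · exact Or.inl (Or.inr ⟨(i, j), rfl⟩)
  · exact Or.inr ⟨i, rfl⟩

/-- Integrality of a vector. -/
def IntB (n : ℕ) (v : EucB n) : Prop := ∀ i, ∃ z : ℤ, (v i : ℝ) = (z : ℝ)

theorem IntB.add {n : ℕ} {v w : EucB n} (hv : IntB n v) (hw : IntB n w) : IntB n (v + w) := by
  intro i
  obtain ⟨a, ha⟩ := hv i
  obtain ⟨b, hb⟩ := hw i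
  exact ⟨a + b, by simp [ha, hb]⟩

theorem IntB.neg {n : ℕ} {v : EucB n} (hv : IntB n v) : IntB n (-v) := by
  intro i
  obtain ⟨a, ha⟩ := hv i
  exact ⟨-a, by simp [ha]⟩

theorem IntB.zsmul {n : ℕ} {v : EucB n} (hv : IntB n v) (z : ℤ) : IntB n ((z : ℝ) • v) := by
  intro i
  obtain ⟨a, ha⟩ := hv i
  exact ⟨z * a, by simp [ha]⟩

theorem IntB.of_eB (n : ℕ) (i : Fin n) : IntB n (eB n i) := by
  intro k
  rw [eB_apply]
  split_ifs
  · exact ⟨1, by simp⟩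
  · exact ⟨0, by simp⟩

theorem IntB.inner_int {n : ℕ} {v w : EucB n} (hv : IntB n v) (hw : IntB n w) :
    ∃ z : ℤ, (⟪v, w⟫ : ℝ) = z := by
  choose a ha using hv
  choose b hb using hw
  refine ⟨∑ i, a i * b i, ?_⟩
  simp [PiLp.inner_apply, ha, hb, mul_comm]

theorem inner_eB (n : ℕ) (v : EucB n) (i : Fin n) : (⟪eB n i, v⟫ : ℝ) = v i := by
  simp [eB, EuclideanSpace.inner_single_left]

theorem inner_eB_right (n : ℕ) (v : EucB n) (i : Fin n) : (⟪v, eB n i⟫ : ℝ) = v i := by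
  rw [real_inner_comm, inner_eB]

theorem IntB.split {n : ℕ} {v : EucB n} (hv : IntB n v) (h0 : v ≠ 0)
    (h : (⟪v, v⟫ : ℝ) ≤ 2) : ∃ i, ∃ u : EucB n, (u = eB n i ∨ u = -eB n i) ∧
      IntB n (v - u) ∧ (v - u) i = 0 ∧ (⟪v - u, v - u⟫ : ℝ) = ⟪v, v⟫ - 1 := by
  obtain ⟨i, hi⟩ : ∃ i, v i ≠ 0 := by
    by_contra! hc
    exact h0 (by ext i; simpa using hc i)
  have hle : v i * v i ≤ 2 := by
    refine le_trans ?_ h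
    rw [PiLp.inner_apply]
    have := Finset.single_le_sum (f := fun k => (⟪v k, v k⟫ : ℝ))
      (fun k _ => real_inner_self_nonneg) (Finset.mem_univ i)
    simpa [sq] using this
  obtain ⟨z, hz⟩ := hv i
  have hle' : (z : ℝ) * (z : ℝ) ≤ 2 := by rw [← hz]; exact hle
  have hi' : (z : ℝ) ≠ 0 := by rw [← hz]; exact hi
  have hz2 : z * z ≤ 2 := by exact_mod_cast hle'
  have hz0 : z ≠ 0 := by exact_mod_cast hi'
  have hz1 : z = 1 ∨ z = -1 := by
    have : z ≤ 1 := by nlinarith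
    have : -1 ≤ z := by nlinarith
    omega
  have hee : (⟪eB n i, eB n i⟫ : ℝ) = 1 := by rw [inner_eB, eB_apply]; simp
  rcases hz1 with rfl | rfl
  · refine ⟨i, eB n i, Or.inl rfl, ?_, ?_, ?_⟩
    · rw [sub_eq_add_neg]; exact hv.add (IntB.of_eB n i).neg
    · simp [hz, eB_apply]
    · rw [inner_sub_left, inner_sub_right, inner_sub_right, inner_eB_right, hee, inner_eB, hz]
      push_cast; ring
  · refine ⟨i, -eB n i, Or.inr rfl, ?_, ?_, ?_⟩
    · rw [sub_neg_eq_add]; exact hv.add (IntB.of_eB n i)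
    · simp [hz, eB_apply]
    · rw [sub_neg_eq_add, inner_add_left, inner_add_right, inner_add_right, inner_eB_right, hee,
        inner_eB, hz]
      push_cast; ring

/-- Roots of type B are the integral vectors of squared norm 1 or 2. -/
theorem mem_DeltaB_iff_int (n : ℕ) (v : EucB n) :
    v ∈ DeltaB n ↔ IntB n v ∧ ((⟪v, v⟫ : ℝ) = 1 ∨ (⟪v, v⟫ : ℝ) = 2) := by
  constructor
  · have I := IntB.of_eB n
    rintro (⟨i, j, hij, (rfl | rfl | rfl | rfl)⟩ | ⟨i, (rfl | rfl)⟩)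
    · refine ⟨(I i).add (I j), Or.inr ?_⟩
      simp only [inner_add_left, inner_add_right, inner_sub_left, inner_sub_right, inner_neg_left,
        inner_neg_right, inner_eB, eB_apply, hij.ne, hij.ne', if_true, if_false]
      norm_num
    · refine ⟨by rw [sub_eq_add_neg]; exact (I i).add (I j).neg, Or.inr ?_⟩
      simp only [inner_add_left, inner_add_right, inner_sub_left, inner_sub_right, inner_neg_left,
        inner_neg_right, inner_eB, eB_apply, hij.ne, hij.ne', if_true, if_false]
      norm_num
    · refine ⟨(I i).neg.add (I j), Or.inr ?_⟩
      simp only [inner_add_left, inner_add_right, inner_sub_left, inner_sub_right, inner_neg_left,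
        inner_neg_right, inner_eB, eB_apply, hij.ne, hij.ne', if_true, if_false]
      norm_num
    · refine ⟨by rw [sub_eq_add_neg]; exact (I i).neg.add (I j).neg, Or.inr ?_⟩
      simp only [inner_add_left, inner_add_right, inner_sub_left, inner_sub_right, inner_neg_left,
        inner_neg_right, inner_eB, eB_apply, hij.ne, hij.ne', if_true, if_false]
      norm_num
    · refine ⟨I i, Or.inl ?_⟩
      simp only [inner_neg_left, inner_neg_right, inner_eB, eB_apply, if_true]
      try norm_num
    · refine ⟨(I i).neg, Or.inl ?_⟩
      simp only [inner_neg_left, inner_neg_right, inner_eB, eB_apply, if_true]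
      try norm_num
  · rintro ⟨hI, hn⟩
    have h0 : v ≠ 0 := by rintro rfl; simp at hn
    obtain ⟨i, u, hu, hI', hui, hN⟩ := hI.split h0 (by rcases hn with h | h <;> rw [h]; norm_num)
    rcases hn with h | h
    · have hz : v - u = 0 := by
        rw [← inner_self_eq_zero (𝕜 := ℝ), hN, h]; norm_num
      rw [sub_eq_zero] at hz
      exact Or.inr ⟨i, by rw [hz]; exact hu⟩
    · have h1 : v - u ≠ 0 := by
        intro hc; rw [hc, h] at hN; norm_num at hN
      obtain ⟨j, w, hw, -, -, hN'⟩ := hI'.split h1 (by rw [hN, h]; norm_num)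
      have hz : v - u - w = 0 := by
        rw [← inner_self_eq_zero (𝕜 := ℝ), hN', hN, h]; norm_num
      have hvw : v - u = w := sub_eq_zero.mp hz
      have hv : v = u + w := by rw [← hvw]; abel
      have hij : i ≠ j := by
        rintro rfl
        rw [hvw] at hui
        rcases hw with rfl | rfl <;> simp [eB_apply] at hui
      rcases lt_or_gt_of_ne hij with hlt | hlt
      · refine Or.inl ⟨i, j, hlt, ?_⟩
        rcases hu with rfl | rfl <;> rcases hw with rfl | rfl <;> simp [hv, sub_eq_add_neg]
      · refine Or.inl ⟨j, i, hlt, ?_⟩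
        rcases hu with rfl | rfl <;> rcases hw with rfl | rfl <;>
          simp [hv, sub_eq_add_neg, add_comm]

/-- An orthogonal involution has determinant `(-1)^dim ker(θ+1)`. -/
theorem det_involution (n : ℕ) (θ : EucB n ≃ₗ[ℝ] EucB n)
    (hiso : ∀ x y, (⟪θ x, θ y⟫ : ℝ) = ⟪x, y⟫) (h2 : ∀ x, θ (θ x) = x) :
    LinearMap.det θ.toLinearMap =
      (-1) ^ Module.finrank ℝ ↥(LinearMap.ker (θ.toLinearMap + LinearMap.id)) := by
  set M := LinearMap.ker (θ.toLinearMap + LinearMap.id) with hM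
  have hmem : ∀ x, x ∈ M ↔ θ x = -x := fun x => by
    rw [hM, LinearMap.mem_ker]
    simp [eq_neg_iff_add_eq_zero]
  have hdet := Mᗮ.det_reflection
  rw [Submodule.orthogonal_orthogonal] at hdet
  rw [← hdet]
  congr 1
  ext1 v
  have ha : (1/2 : ℝ) • (v - θ v) ∈ M := by
    rw [hmem, map_smul, map_sub, h2, ← smul_neg, neg_sub]
  have hb : (1/2 : ℝ) • (v + θ v) ∈ Mᗮ := by
    rw [Submodule.mem_orthogonal]
    intro u hu
    have h1 := hiso u v
    have h3 := hiso u (θ v)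
    rw [(hmem u).1 hu, inner_neg_left] at h1
    rw [inner_smul_right, inner_add_right]
    rw [← h1]; simp
  have hv : v = (1/2 : ℝ) • (v - θ v) + (1/2 : ℝ) • (v + θ v) := by module
  have h4 := Submodule.reflection_mem_subspace_orthogonal_precomplement_eq_neg ha
  have h5 := Submodule.reflection_mem_subspace_eq_self hb
  change θ v = Mᗮ.reflection v
  conv_rhs => rw [hv, map_add, h4, h5]
  module

/-- Sign of a root. -/
def sgnB (n : ℕ) (v : EucB n) : ℝ := by
  classical exact if v ∈ DeltaBpos n then 1 else -1

theorem sgnB_pos {n : ℕ} {v : EucB n} (h : v ∈ DeltaBpos n) : sgnB n v = 1 := by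
  simp [sgnB, h]

theorem sgnB_neg {n : ℕ} {v : EucB n} (h : v ∉ DeltaBpos n) : sgnB n v = -1 := by
  simp [sgnB, h]

/-- The positive roots as a finset. -/
def posB (n : ℕ) : Finset (EucB n) := (DeltaBpos_finite n).toFinset

theorem mem_posB {n : ℕ} {v : EucB n} : v ∈ posB n ↔ v ∈ DeltaBpos n := by
  simp [posB]

/-- The positive one among `v` and `-v`. -/
def absB (n : ℕ) (v : EucB n) : EucB n := by
  classical exact if v ∈ DeltaBpos n then v else -v

theorem absB_cases (n : ℕ) (v : EucB n) : absB n v = v ∨ absB n v = -v := by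
  unfold absB; split_ifs <;> simp

theorem absB_mem {n : ℕ} {v : EucB n} (h : v ∈ DeltaB n) : absB n v ∈ DeltaBpos n := by
  rw [mem_DeltaB_iff] at h
  unfold absB
  split_ifs with h1
  · exact h1
  · exact h.resolve_left h1

theorem absB_neg {n : ℕ} {v : EucB n} (h : v ∈ DeltaB n) : absB n (-v) = absB n v := by
  rw [mem_DeltaB_iff] at h
  rcases h with h | h
  · simp [absB, h, neg_notMem n v h]
  · have := neg_notMem n _ h
    rw [neg_neg] at this
    simp [absB, h, this]

theorem absB_of_pos {n : ℕ} {v : EucB n} (h : v ∈ DeltaBpos n) : absB n v = v := by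
  simp [absB, h]

theorem sgnB_negv {n : ℕ} {v : EucB n} (h : v ∈ DeltaB n) : sgnB n (-v) = -sgnB n v := by
  rw [mem_DeltaB_iff] at h
  rcases h with h | h
  · simp [sgnB, h, neg_notMem n v h]
  · have := neg_notMem n _ h
    rw [neg_neg] at this
    simp [sgnB, h, this]

theorem sgnB_sq (n : ℕ) (v : EucB n) : sgnB n v * sgnB n v = 1 := by
  unfold sgnB; split_ifs <;> simp

theorem DeltaB_neg {n : ℕ} {v : EucB n} (h : v ∈ DeltaB n) : -v ∈ DeltaB n := by
  rw [mem_DeltaB_iff] at h ⊢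
  rw [neg_neg]; exact h.symm

theorem DeltaB_of_pos {n : ℕ} {v : EucB n} (h : v ∈ DeltaBpos n) : v ∈ DeltaB n :=
  (mem_DeltaB_iff n v).2 (Or.inl h)

theorem absB_inv {n : ℕ} (w w' : EucB n ≃ₗ[ℝ] EucB n) (hw : ∀ v ∈ DeltaB n, w v ∈ DeltaB n)
    (h : ∀ v, w' (w v) = v) {v : EucB n} (hv : v ∈ DeltaBpos n) :
    absB n (w' (absB n (w v))) = v := by
  have hv' := DeltaB_of_pos hv
  rcases absB_cases n (w v) with h1 | h1 <;> rw [h1]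
  · rw [h, absB_of_pos hv]
  · rw [map_neg, h, absB_neg hv', absB_of_pos hv]

theorem prod_even {n : ℕ} (w : EucB n ≃ₗ[ℝ] EucB n) (hw : ∀ v, w v ∈ DeltaB n ↔ v ∈ DeltaB n)
    (f : EucB n → ℝ) (hf : ∀ v ∈ DeltaB n, f (-v) = f v) :
    ∏ α ∈ posB n, f (w α) = ∏ α ∈ posB n, f α := by
  have hws : ∀ v, w.symm v ∈ DeltaB n ↔ v ∈ DeltaB n := fun v => by
    rw [← hw, LinearEquiv.apply_symm_apply]
  refine Finset.prod_nbij' (fun α => absB n (w α)) (fun α => absB n (w.symm α)) ?_ ?_ ?_ ?_ ?_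
  · intro a ha
    exact mem_posB.2 (absB_mem ((hw a).2 (DeltaB_of_pos (mem_posB.1 ha))))
  · intro a ha
    exact mem_posB.2 (absB_mem ((hws a).2 (DeltaB_of_pos (mem_posB.1 ha))))
  · intro a ha
    exact absB_inv w w.symm (fun v hv => (hw v).2 hv) (by simp) (mem_posB.1 ha)
  · intro a ha
    exact absB_inv w.symm w (fun v hv => (hws v).2 hv) (by simp) (mem_posB.1 ha)
  · intro a ha
    rcases absB_cases n (w a) with h1 | h1 <;> simp only [h1]
    rw [hf _ ((hw a).2 (DeltaB_of_pos (mem_posB.1 ha)))]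

/-- The sign `(-1)^|N(w)|`. -/
def sigB (n : ℕ) (w : EucB n ≃ₗ[ℝ] EucB n) : ℝ := ∏ α ∈ posB n, sgnB n (w α)

theorem sigB_mul {n : ℕ} (u w : EucB n ≃ₗ[ℝ] EucB n) (hu : ∀ v, u v ∈ DeltaB n ↔ v ∈ DeltaB n)
    (hw : ∀ v, w v ∈ DeltaB n ↔ v ∈ DeltaB n) : sigB n (u * w) = sigB n u * sigB n w := by
  have h := prod_even w hw (fun v => sgnB n (u v) * sgnB n v) (fun v hv => by
    rw [map_neg, sgnB_negv hv, sgnB_negv ((hu v).2 hv)]; ring)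
  simp only [Finset.prod_mul_distrib] at h
  have h1 : ∏ α ∈ posB n, sgnB n α = 1 :=
    Finset.prod_eq_one fun a ha => sgnB_pos (mem_posB.1 ha)
  have h2 : sigB n w * sigB n w = 1 := by
    unfold sigB
    rw [← Finset.prod_mul_distrib]
    exact Finset.prod_eq_one fun a _ => sgnB_sq n _
  rw [h1, mul_one] at h
  change sigB n (u * w) * sigB n w = sigB n u at h
  rw [← h, mul_assoc, h2, mul_one]

theorem sigB_one (n : ℕ) : sigB n 1 = 1 :=
  Finset.prod_eq_one fun _ ha => sgnB_pos (mem_posB.1 ha)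

theorem sigB_eq_pow (n : ℕ) (w : EucB n ≃ₗ[ℝ] EucB n) :
    sigB n w = (-1) ^ Nat.card {α : EucB n // α ∈ DeltaBpos n ∧ w α ∉ DeltaBpos n} := by
  classical
  rw [Nat.subtype_card ((posB n).filter (fun α => w α ∉ DeltaBpos n))
    (fun x => by rw [Finset.mem_filter, mem_posB])]
  rw [Finset.card_filter, ← Finset.prod_pow_eq_pow_sum]
  refine Finset.prod_congr rfl fun a _ => ?_
  by_cases h : w a ∈ DeltaBpos n <;> simp [h, sgnB]

theorem DeltaB_inner_pos {n : ℕ} {α : EucB n} (hα : α ∈ DeltaB n) : (0 : ℝ) < ⟪α, α⟫ := by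
  rcases ((mem_DeltaB_iff_int n α).1 hα).2 with h | h <;> rw [h] <;> norm_num

theorem sReflB_apply {n : ℕ} {α : EucB n} (hα : α ∈ DeltaB n) (x : EucB n) :
    sReflB n α x = x - (2 / ⟪α, α⟫ * ⟪x, α⟫ : ℝ) • α := by
  have hp := DeltaB_inner_pos hα
  have hform : ∀ y, corootForm n α y = (2 / ⟪α, α⟫ * ⟪y, α⟫ : ℝ) := fun y => by
    change (⟪y, corootB n α⟫ : ℝ) = _
    rw [corootB, inner_smul_right]
  have h : corootForm n α α = 2 := by
    rw [hform, div_mul_cancel₀ _ hp.ne']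
  rw [sReflB, dif_pos h, Module.reflection_apply, hform]

theorem sReflB_coeff {n : ℕ} {α : EucB n} (hα : α ∈ DeltaB n) {x : EucB n} (hx : IntB n x) :
    ∃ m : ℤ, (2 / ⟪α, α⟫ * ⟪x, α⟫ : ℝ) = m := by
  obtain ⟨hI, hn⟩ := (mem_DeltaB_iff_int n α).1 hα
  obtain ⟨z, hz⟩ := hx.inner_int hI
  rcases hn with h | h
  · exact ⟨2 * z, by rw [h, hz]; push_cast; ring⟩
  · exact ⟨z, by rw [h, hz]; ring⟩

theorem sReflB_inner {n : ℕ} {α : EucB n} (hα : α ∈ DeltaB n) (x y : EucB n) :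
    (⟪sReflB n α x, sReflB n α y⟫ : ℝ) = ⟪x, y⟫ := by
  have hp := (DeltaB_inner_pos hα).ne'
  rw [sReflB_apply hα, sReflB_apply hα]
  simp only [inner_sub_left, inner_sub_right, real_inner_smul_left, real_inner_smul_right]
  rw [real_inner_comm y α]
  field_simp
  ring

theorem sReflB_self {n : ℕ} {α : EucB n} (hα : α ∈ DeltaB n) : sReflB n α α = -α := by
  have hp := (DeltaB_inner_pos hα).ne'
  rw [sReflB_apply hα, div_mul_cancel₀ _ hp]
  module

theorem sReflB_invol {n : ℕ} {α : EucB n} (hα : α ∈ DeltaB n) (x : EucB n) :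
    sReflB n α (sReflB n α x) = x := by
  conv_lhs => rw [sReflB_apply hα x, map_sub, map_smul, sReflB_self hα, sReflB_apply hα x]
  module

theorem sReflB_int {n : ℕ} {α : EucB n} (hα : α ∈ DeltaB n) {x : EucB n} (hx : IntB n x) :
    IntB n (sReflB n α x) := by
  obtain ⟨m, hm⟩ := sReflB_coeff hα hx
  rw [sReflB_apply hα, hm, sub_eq_add_neg]
  exact hx.add (((mem_DeltaB_iff_int n α).1 hα).1.zsmul m).neg

theorem sReflB_unique {n : ℕ} {α β : EucB n} (hα : α ∈ DeltaB n) (hβ : β ∈ DeltaBpos n)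
    (h : sReflB n α β = -β) : β = absB n α := by
  obtain ⟨hIβ, hnβ⟩ := (mem_DeltaB_iff_int n β).1 (DeltaB_of_pos hβ)
  obtain ⟨m, hm⟩ := sReflB_coeff hα hIβ
  rw [sReflB_apply hα, hm] at h
  have h2 : β = ((m : ℝ) / 2) • α := by
    have h3 : (2 : ℝ) • β = (m : ℝ) • α := by
      rw [two_smul]
      have := sub_eq_iff_eq_add.1 h
      nth_rewrite 1 [this]
      abel
    rw [div_eq_inv_mul, mul_smul, ← h3, smul_smul]; norm_num
  have h4 : (⟪β, β⟫ : ℝ) * 4 = m * m * ⟪α, α⟫ := by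
    rw [h2, real_inner_smul_left, real_inner_smul_right]; ring
  have hm2 : m = 2 ∨ m = -2 := by
    have h5 : m * m = 4 ∨ m * m = 8 ∨ m * m * 2 = 4 := by
      rcases hnβ with hb | hb <;> rcases ((mem_DeltaB_iff_int n α).1 hα).2 with ha | ha <;>
        rw [ha, hb] at h4
      · left; have : (m : ℝ) * m = 4 := by linarith
        exact_mod_cast this
      · right; right; have : (m : ℝ) * m * 2 = 4 := by linarith
        exact_mod_cast this
      · right; left; have : (m : ℝ) * m = 8 := by linarith
        exact_mod_cast this
      · left; have : (m : ℝ) * m = 4 := by linarith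
        exact_mod_cast this
    have h6 : m * m ≤ 8 := by omega
    have hu : m ≤ 2 := by by_contra hc; nlinarith
    have hl : -2 ≤ m := by by_contra hc; nlinarith
    interval_cases m <;> simp_all
  rcases hm2 with rfl | rfl
  · have : β = α := by rw [h2]; norm_num
    rw [← this, absB_of_pos hβ]
  · have : α = -β := by rw [h2]; norm_num
    rw [this, absB_neg (DeltaB_of_pos hβ), absB_of_pos hβ]

theorem preserves_DeltaB {n : ℕ} (w : EucB n ≃ₗ[ℝ] EucB n)
    (hiso : ∀ x y, (⟪w x, w y⟫ : ℝ) = ⟪x, y⟫) (hint : ∀ v, IntB n (w v) ↔ IntB n v) (v : EucB n) :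
    w v ∈ DeltaB n ↔ v ∈ DeltaB n := by
  rw [mem_DeltaB_iff_int, mem_DeltaB_iff_int, hiso, hint]

theorem sReflB_int_iff {n : ℕ} {α : EucB n} (hα : α ∈ DeltaB n) (x : EucB n) :
    IntB n (sReflB n α x) ↔ IntB n x :=
  ⟨fun h => by rw [← sReflB_invol hα x]; exact sReflB_int hα h, sReflB_int hα⟩

theorem sigB_sReflB {n : ℕ} {α : EucB n} (hα : α ∈ DeltaB n) : sigB n (sReflB n α) = -1 := by
  classical
  set s := sReflB n α with hs
  have hinv : ∀ x, s (s x) = x := sReflB_invol hα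
  have hsD : ∀ v, s v ∈ DeltaB n ↔ v ∈ DeltaB n :=
    preserves_DeltaB s (sReflB_inner hα) (sReflB_int_iff hα)
  have ha : absB n α ∈ DeltaBpos n := absB_mem hα
  have hsa : s (absB n α) = -absB n α := by
    rcases absB_cases n α with h | h <;> rw [h]
    · exact sReflB_self hα
    · rw [map_neg, hs, sReflB_self hα]
  unfold sigB
  rw [← Finset.mul_prod_erase _ _ (mem_posB.2 ha), hsa, sgnB_neg (neg_notMem n _ ha)]
  suffices h : ∏ β ∈ (posB n).erase (absB n α), sgnB n (s β) = 1 by rw [h, mul_one]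
  have mem : ∀ β ∈ (posB n).erase (absB n α), β ∈ DeltaBpos n ∧ β ≠ absB n α := fun β hβ => by
    rw [Finset.mem_erase, mem_posB] at hβ
    exact hβ.symm
  refine Finset.prod_involution (fun β _ => absB n (s β)) ?_ ?_ ?_ ?_
  · intro β hβ
    have hp := (mem β hβ).1
    by_cases h : s β ∈ DeltaBpos n
    · simp only [absB_of_pos h]
      rw [hinv, sgnB_pos h, sgnB_pos hp, mul_one]
    · have h' : absB n (s β) = -s β := by simp [absB, h]
      simp only [h']
      rw [map_neg, hinv, sgnB_neg h, sgnB_neg (neg_notMem n _ hp)]; norm_num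
  · intro β hβ hne heq
    obtain ⟨hp, hb⟩ := mem β hβ
    by_cases h : s β ∈ DeltaBpos n
    · exact hne (sgnB_pos h)
    · have h' : absB n (s β) = -s β := by simp [absB, h]
      rw [h'] at heq
      refine hb (sReflB_unique hα hp ?_)
      rw [← hs, ← neg_eq_iff_eq_neg.1 heq]
  · intro β hβ
    obtain ⟨hp, hb⟩ := mem β hβ
    rw [Finset.mem_erase, mem_posB]
    refine ⟨fun heq => hb ?_, absB_mem ((hsD β).2 (DeltaB_of_pos hp))⟩
    have h1 := absB_inv s s (fun v hv => (hsD v).2 hv) hinv hp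
    rw [heq, hsa, absB_neg (DeltaB_of_pos ha), absB_of_pos ha] at h1
    exact h1.symm
  · intro β hβ
    exact absB_inv s s (fun v hv => (hsD v).2 hv) hinv (mem β hβ).1

theorem det_sReflB {n : ℕ} {α : EucB n} (hα : α ∈ DeltaB n) :
    LinearMap.det (sReflB n α).toLinearMap = -1 := by
  rw [det_involution n _ (sReflB_inner hα) (sReflB_invol hα)]
  have h0 : α ≠ 0 := by
    rintro rfl
    have := DeltaB_inner_pos hα
    simp at this
  have hk : LinearMap.ker ((sReflB n α).toLinearMap + LinearMap.id) = Submodule.span ℝ {α} := by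
    ext x
    rw [LinearMap.mem_ker, Submodule.mem_span_singleton]
    change sReflB n α x + x = 0 ↔ _
    constructor
    · intro h
      rw [sReflB_apply hα] at h
      refine ⟨(1 / 2 : ℝ) * (2 / ⟪α, α⟫ * ⟪x, α⟫ : ℝ), ?_⟩
      generalize (2 / ⟪α, α⟫ * ⟪x, α⟫ : ℝ) = c at h ⊢
      have h3 : c • α = (2 : ℝ) • x := by
        rw [two_smul]
        rw [sub_add_eq_add_sub, sub_eq_zero] at h
        exact h.symm
      rw [mul_smul, h3, smul_smul]; norm_num
    · rintro ⟨c, rfl⟩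
      rw [map_smul, sReflB_self hα]; module
  rw [hk, finrank_span_singleton h0, pow_one]

/-- Every Weyl group element is orthogonal, preserves integrality, and its determinant is
the parity of its inversion set. -/
theorem WeylB_props {n : ℕ} {w : EucB n ≃ₗ[ℝ] EucB n} (hw : w ∈ WeylB n) :
    (∀ x y, (⟪w x, w y⟫ : ℝ) = ⟪x, y⟫) ∧ (∀ v, IntB n (w v) ↔ IntB n v) ∧
      sigB n w = LinearMap.det w.toLinearMap := by
  induction hw using Subgroup.closure_induction with
  | mem g hg =>
    obtain ⟨α, hα, rfl⟩ := hg
    exact ⟨sReflB_inner hα, sReflB_int_iff hα, by rw [sigB_sReflB hα, det_sReflB hα]⟩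
  | one =>
    refine ⟨fun _ _ => rfl, fun _ => Iff.rfl, ?_⟩
    rw [sigB_one]
    exact LinearMap.det_id.symm
  | mul u w _ _ hu hw =>
    obtain ⟨u1, u2, u3⟩ := hu
    obtain ⟨w1, w2, w3⟩ := hw
    refine ⟨fun x y => (u1 _ _).trans (w1 _ _), fun v => (u2 _).trans (w2 _), ?_⟩
    rw [sigB_mul u w (preserves_DeltaB u u1 u2) (preserves_DeltaB w w1 w2), u3, w3,
      ← LinearMap.det_comp]
    rfl
  | inv w _ hw =>
    obtain ⟨w1, w2, w3⟩ := hw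
    have hc : ∀ x, w (w⁻¹ x) = x := fun x => w.apply_symm_apply x
    have i1 : ∀ x y, (⟪w⁻¹ x, w⁻¹ y⟫ : ℝ) = ⟪x, y⟫ := fun x y => by rw [← w1, hc, hc]
    have i2 : ∀ v, IntB n (w⁻¹ v) ↔ IntB n v := fun v => by rw [← w2, hc]
    refine ⟨i1, i2, ?_⟩
    have h := sigB_mul w w⁻¹ (preserves_DeltaB w w1 w2) (preserves_DeltaB _ i1 i2)
    rw [mul_inv_cancel, sigB_one, w3] at h
    have hd : LinearMap.det w.toLinearMap * LinearMap.det (w⁻¹).toLinearMap = 1 := by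
      rw [← LinearMap.det_comp]
      have : w.toLinearMap ∘ₗ (w⁻¹).toLinearMap = LinearMap.id := by
        ext1 x; exact hc x
      rw [this, LinearMap.det_id]
    have hne : LinearMap.det w.toLinearMap ≠ 0 := left_ne_zero_of_mul_eq_one hd
    exact mul_left_cancel₀ hne (h.symm.trans hd.symm)

/-- For every involution `θ ∈ W(Bₙ)`, the quantity
`|{α ∈ Δ⁺ : θα ∉ Δ⁺}| + dim ker(θ + id)` is even; consequently the length
`ℓ(θ) = (1/2)|{α ∈ Δ⁺ : θα ∉ Δ⁺}| + (1/2) dim ker(θ + id)` is a nonnegative integer. -/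
theorem length_is_integer (n : ℕ) (hn : 0 < n)
    (θ : EucB n ≃ₗ[ℝ] EucB n) (hθW : θ ∈ WeylB n) (hθ2 : θ * θ = 1) :
    Even (Nat.card {α : EucB n // α ∈ DeltaBpos n ∧ θ α ∉ DeltaBpos n} +
        Module.finrank ℝ ↥(LinearMap.ker (θ.toLinearMap + LinearMap.id))) ∧
    ∃ l : ℕ,
      (Nat.card {α : EucB n // α ∈ DeltaBpos n ∧ θ α ∉ DeltaBpos n} : ℚ) / 2 +
        (Module.finrank ℝ ↥(LinearMap.ker (θ.toLinearMap + LinearMap.id)) : ℚ) / 2 = l := by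
  obtain ⟨h1, h2, h3⟩ := WeylB_props hθW
  have hinv : ∀ x, θ (θ x) = x := fun x => congrArg (fun g => g x) hθ2
  rw [sigB_eq_pow, det_involution n θ h1 hinv] at h3
  have hE : Even (Nat.card {α : EucB n // α ∈ DeltaBpos n ∧ θ α ∉ DeltaBpos n} +
        Module.finrank ℝ ↥(LinearMap.ker (θ.toLinearMap + LinearMap.id))) := by
    rw [← neg_one_pow_eq_one_iff_even (R := ℝ) (by norm_num), pow_add, h3, ← mul_pow]
    simp
  refine ⟨hE, ?_⟩
  obtain ⟨l, hl⟩ := hE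
  refine ⟨l, ?_⟩
  rw [← add_div, ← Nat.cast_add, hl]
  push_cast
  ring
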